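/- arXiv:1509.02424 — 8 statements merged into one kernel-verified Lean document; each statement's English description precedes it below -/
import Mathlib

section
/- Let P be a preference profile with linear preference orders over a finite set A of alternatives and let A' ⊆ A. (1) If c ∈ A ∖ A' is not an (A' ∪ {c})-majority winner, then in the profile restricted to the alternatives A' ∪ {c}, c is not the successive winner under any agenda over A' ∪ {c} in which c precedes all alternatives of A'. (2) If A ∖ A' ≠ ∅ and every alternative c ∈ A ∖ A' is an (A' ∪ {c})-majority winner, then for every agenda L over A the successive winner of P under L does not belong to A'. -/
open scoped Classical

/-- The number of voters in profile `prof` who strictly prefer `b` to `c`. -/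
noncomputable def prefCount {α : Type*} {n : ℕ} (prof : Fin n → α → α → Prop) (b c : α) : ℕ :=
  (Finset.univ.filter fun i => prof i b c).card

/-- Alternative `b` beats alternative `c`: more than `n/2` voters prefer `b` to `c`. -/
def Beats {α : Type*} {n : ℕ} (prof : Fin n → α → α → Prop) (b c : α) : Prop :=
  2 * prefCount prof b c > n

/-- `a` is an `S`-majority winner: more than `n/2` voters prefer `a`
to every alternative of `S \ {a}`. -/
def IsMajWinner {α : Type*} {n : ℕ} (prof : Fin n → α → α → Prop) (S : Finset α) (a : α) :
    Prop :=
  2 * (Finset.univ.filter fun i => ∀ c ∈ S, c ≠ a → prof i a c).card > n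

/-- The successive winner for the agenda given as a list: the first alternative of the
agenda that is a majority winner with respect to itself and all later alternatives. -/
noncomputable def succWinner {α : Type*} [DecidableEq α] {n : ℕ}
    (prof : Fin n → α → α → Prop) : List α → Option α
  | [] => none
  | a :: rest =>
    if IsMajWinner prof ((a :: rest).toFinset) a then some a
    else succWinner prof rest

/-- The amendment winner for the agenda given as a list: the current round winner is
challenged by the next alternative on the agenda, which takes over if it beats it. -/
noncomputable def amendWinner {α : Type*} {n : ℕ}
    (prof : Fin n → α → α → Prop) : List α → Option α
  | [] => none
  | a :: rest => some (rest.foldl (fun win c => if Beats prof c win then c else win) a)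

/- Two strict majorities share a voter, so two alternatives that each face the other cannot both
be majority winners. Suppose every alternative of the agenda outside `A'` is a majority winner
against `A'`. An alternative of `A'` cannot win while some `c` outside `A'` is still to come, by the
clash with `c`; and the last such `c` faces only alternatives of `A'`, so the procedure stops there
at the latest. -/

section

variable {α : Type*} {n : ℕ} {prof : Fin n → α → α → Prop}

namespace IsMajWinner

variable {S T : Finset α} {a b : α}

theorem anti (h : IsMajWinner prof T a) (hST : S ⊆ T) : IsMajWinner prof S a :=
  lt_of_lt_of_le h <| Nat.mul_le_mul_left 2 <| Finset.card_le_card <|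
    Finset.monotone_filter_right _ fun _ _ hi c hc => hi c (hST hc)

theorem eq_of_mem_of_mem [∀ i, Std.Asymm (prof i)] (ha : IsMajWinner prof S a)
    (hb : IsMajWinner prof T b) (hbS : b ∈ S) (haT : a ∈ T) : a = b := by
  by_contra hab
  obtain ⟨i, hi⟩ : ((Finset.univ.filter fun i => ∀ c ∈ S, c ≠ a → prof i a c) ∩
      Finset.univ.filter fun i => ∀ c ∈ T, c ≠ b → prof i b c).Nonempty := by
    refine Finset.inter_nonempty_of_card_lt_card_add_card (Finset.subset_univ _)
      (Finset.subset_univ _) ?_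
    rw [Finset.card_fin]
    unfold IsMajWinner at ha hb
    omega
  simp only [Finset.mem_inter, Finset.mem_filter, Finset.mem_univ, true_and] at hi
  exact asymm (hi.1 b hbS (Ne.symm hab)) (hi.2 a haT hab)

end IsMajWinner

variable [DecidableEq α] {a : α} {L : List α}

theorem succWinner_cons_of_isMajWinner (h : IsMajWinner prof (a :: L).toFinset a) :
    succWinner prof (a :: L) = some a :=
  if_pos h

theorem succWinner_cons_of_not_isMajWinner (h : ¬ IsMajWinner prof (a :: L).toFinset a) :
    succWinner prof (a :: L) = succWinner prof L :=
  if_neg h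

theorem mem_of_succWinner_eq_some (h : succWinner prof L = some a) : a ∈ L := by
  induction L with
  | nil => cases h
  | cons b L ih =>
    by_cases hb : IsMajWinner prof (b :: L).toFinset b
    · rw [succWinner_cons_of_isMajWinner hb, Option.some_inj] at h
      exact h ▸ List.mem_cons_self
    · rw [succWinner_cons_of_not_isMajWinner hb] at h
      exact List.mem_cons_of_mem b (ih h)

theorem isMajWinner_of_succWinner_cons_eq_some_self (ha : a ∉ L)
    (h : succWinner prof (a :: L) = some a) : IsMajWinner prof (a :: L).toFinset a := by
  by_contra hmaj
  rw [succWinner_cons_of_not_isMajWinner hmaj] at h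
  exact ha (mem_of_succWinner_eq_some h)

theorem notMem_of_succWinner_eq_some [∀ i, Std.Asymm (prof i)] {B : Finset α}
    (hL : ∃ c ∈ L, c ∉ B) (hmaj : ∀ c ∈ L, c ∉ B → IsMajWinner prof (insert c B) c)
    (h : succWinner prof L = some a) : a ∉ B := by
  induction L with
  | nil => cases h
  | cons b L ih =>
    by_cases hb : IsMajWinner prof (b :: L).toFinset b
    · rw [succWinner_cons_of_isMajWinner hb, Option.some_inj] at h
      subst h
      intro hbB
      obtain ⟨c, hcL, hcB⟩ := hL
      have hbc : b = c := hb.eq_of_mem_of_mem (hmaj c hcL hcB) (List.mem_toFinset.2 hcL)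
        (Finset.mem_insert_of_mem hbB)
      exact hcB (hbc ▸ hbB)
    · rw [succWinner_cons_of_not_isMajWinner hb] at h
      refine ih ?_ (fun c hc => hmaj c (List.mem_cons_of_mem b hc)) h
      by_contra! hLB
      have hbB : b ∉ B := by
        obtain ⟨c, hc, hcB⟩ := hL
        rcases List.mem_cons.1 hc with rfl | hcL
        · exact hcB
        · exact absurd (hLB c hcL) hcB
      refine hb ((hmaj b List.mem_cons_self hbB).anti ?_)
      rw [List.toFinset_cons]
      exact Finset.insert_subset_insert b fun c hc => hLB c (List.mem_toFinset.1 hc)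

end

theorem stmt1_general {α : Type*} [DecidableEq α] {n : ℕ} (prof : Fin n → α → α → Prop)
    [∀ i, Std.Asymm (prof i)] (A' : Finset α) :
    (∀ c ∉ A', ¬ IsMajWinner prof (insert c A') c →
      ∀ rest : List α, rest.toFinset = A' → succWinner prof (c :: rest) ≠ some c) ∧
    (∀ L : List α, (∃ c ∈ L, c ∉ A') → (∀ c ∈ L, c ∉ A' → IsMajWinner prof (insert c A') c) →
      ∀ a ∈ A', succWinner prof L ≠ some a) := by
  refine ⟨?_, fun L hL hmaj a ha h => notMem_of_succWinner_eq_some hL hmaj h ha⟩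
  rintro c hc hmaj rest rfl h
  rw [← List.toFinset_cons] at hmaj
  exact hmaj (isMajWinner_of_succWinner_cons_eq_some_self (mt List.mem_toFinset.2 hc) h)

/-- (1) If `c ∉ A'` is not an `(A' ∪ {c})`-majority winner, then in the profile restricted
to `A' ∪ {c}` (which, for the successive procedure, amounts to running the procedure on an
agenda listing exactly the alternatives of `A' ∪ {c}`), `c` is not the successive winner
under any agenda in which `c` precedes all alternatives of `A'`.
(2) If `A ∖ A' ≠ ∅` and every `c ∈ A ∖ A'` is an `(A' ∪ {c})`-majority winner, then under
every agenda the successive winner does not belong to `A'`. -/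
theorem stmt1 {α : Type*} [Fintype α] [DecidableEq α] {n : ℕ}
    (prof : Fin n → α → α → Prop)
    (hlin : ∀ i, IsStrictTotalOrder α (prof i))
    (A' : Finset α) :
    (∀ c ∉ A', ¬ IsMajWinner prof (insert c A') c →
      ∀ rest : List α, rest.Nodup → rest.toFinset = A' →
        succWinner prof (c :: rest) ≠ some c) ∧
    ((Finset.univ \ A').Nonempty →
      (∀ c ∉ A', IsMajWinner prof (insert c A') c) →
      ∀ L : List α, L.Nodup → (∀ a : α, a ∈ L) →
        ∀ a ∈ A', succWinner prof L ≠ some a) := by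
  obtain ⟨first, second⟩ := stmt1_general prof A'
  exact ⟨fun c hc hmaj rest _ => first c hc hmaj rest, fun ⟨x, hx⟩ hmaj L _ hL =>
    second L ⟨x, hL x, (Finset.mem_sdiff.1 hx).2⟩ fun c _ => hmaj c⟩
end

section
/- Let P be a preference profile with linear preference orders over a finite set A of alternatives, with an odd number n of voters, and let p ∈ A. There exists an agenda over A under which p is the amendment winner of P if and only if for every alternative c ∈ A ∖ {p} there is a sequence p = x_0, x_1, …, x_t = c of alternatives such that x_{ℓ−1} beats x_ℓ for every ℓ ∈ {1, …, t} (that is, every other alternative is reachable from p by a directed path in the majority tournament of P). -/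
open scoped Classical

/-!
The eventual winner `w` reaches every alternative by induction on the rounds: the winner of a round
either equals or beats each of the two contestants. Conversely, search the majority tournament from
`p`, each newly discovered alternative being beaten by an earlier one, and let the agenda be the
reverse of the order of discovery. Then every round winner other than `p` is beaten by some
alternative still to come, so `p`, which comes last, wins.
-/

section Agenda

variable {α : Type*} {r : α → α → Prop} {p : α}

/-- The winner of one round of the amendment procedure for the relation `r`, in which `c` challenges
the current winner `w`; the current winner stays unless `c` beats it. -/
noncomputable def roundWinner (r : α → α → Prop) (w c : α) : α :=
  if r c w then c else w

theorem reflTransGen_roundWinner_left (w c : α) :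
    Relation.ReflTransGen r (roundWinner r w c) w := by
  unfold roundWinner
  split_ifs with hcw
  · exact .single hcw
  · exact .refl

theorem reflTransGen_roundWinner_right [Std.Trichotomous r] (w c : α) :
    Relation.ReflTransGen r (roundWinner r w c) c := by
  unfold roundWinner
  split_ifs with hcw
  · exact .refl
  · rcases Std.Trichotomous.rel_or_eq_or_rel_swap (r := r) (a := w) (b := c) with hwc | rfl | hcw'
    · exact .single hwc
    · exact .refl
    · exact absurd hcw' hcw

theorem reflTransGen_foldl_roundWinner [Std.Trichotomous r] {a c : α} {L : List α}
    (hc : c ∈ a :: L) : Relation.ReflTransGen r (L.foldl (roundWinner r) a) c := by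
  induction L generalizing a c with
  | nil => rw [List.mem_singleton.1 hc, List.foldl_nil]
  | cons b L ih =>
    have reaches_first : Relation.ReflTransGen r
        (L.foldl (roundWinner r) (roundWinner r a b)) (roundWinner r a b) := ih List.mem_cons_self
    simp only [List.mem_cons] at hc
    rcases hc with rfl | rfl | hcL
    · exact reaches_first.trans (reflTransGen_roundWinner_left c b)
    · exact reaches_first.trans (reflTransGen_roundWinner_right a c)
    · exact ih (List.mem_cons_of_mem _ hcL)

/-- A search of the directed graph `r` from the root `p`, recorded with the most recently discovered
vertex first: every vertex but the root is an out-neighbour of one discovered earlier. Vertices may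
be discovered repeatedly. -/
inductive IsReverseSearch (r : α → α → Prop) (p : α) : List α → Prop
  | root : IsReverseSearch r p [p]
  | cons {x y : α} {L : List α} (hL : IsReverseSearch r p L) (hx : x ∈ L) (hxy : r x y) :
      IsReverseSearch r p (y :: L)

namespace IsReverseSearch

theorem root_mem {L : List α} (hL : IsReverseSearch r p L) : p ∈ L := by
  induction hL with
  | root => exact List.mem_singleton_self p
  | cons _ _ _ ih => exact List.mem_cons_of_mem _ ih

theorem foldl_roundWinner {L : List α} (hL : IsReverseSearch r p L) {w x : α} (hx : x ∈ L)
    (hxw : r x w) : L.foldl (roundWinner r) w = p := by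
  induction hL generalizing w x with
  | root =>
    obtain rfl := List.mem_singleton.1 hx
    exact if_pos hxw
  | @cons z y L _ hz hzy ih =>
    rw [List.foldl_cons, roundWinner]
    split_ifs with hyw
    · exact ih hz hzy
    · have hxL : x ∈ L := (List.mem_cons.1 hx).resolve_left fun hxy => hyw (hxy ▸ hxw)
      exact ih hxL hxw

theorem exists_cons {L : List α} (hL : IsReverseSearch r p L) {c : α} (hc : c ∉ L)
    (hpc : Relation.TransGen r p c) : ∃ y ∉ L, IsReverseSearch r p (y :: L) := by
  by_contra! hstuck
  have not_mem_of_rel {x y : α} (hxy : r x y) (hy : y ∉ L) : x ∉ L :=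
    fun hx => hstuck y hy (hL.cons hx hxy)
  exact hpc.closed' (P := (· ∉ L)) not_mem_of_rel hc hL.root_mem

theorem exists_nodup_forall_mem [Finite α] (hreach : ∀ c, c ≠ p → Relation.TransGen r p c) :
    ∃ L, IsReverseSearch r p L ∧ L.Nodup ∧ ∀ a, a ∈ L := by
  have := Fintype.ofFinite α
  have hfinite : {L : List α | IsReverseSearch r p L ∧ L.Nodup}.Finite :=
    (List.finite_length_le α (Fintype.card α)).subset fun _ hL => hL.2.length_le_card
  obtain ⟨L, ⟨hL, hnodup⟩, hmax⟩ :=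
    hfinite.exists_maximalFor List.length _ ⟨[p], root, List.nodup_singleton p⟩
  refine ⟨L, hL, hnodup, fun c => by_contra fun hc => ?_⟩
  have hcp : c ≠ p := fun h => hc (h ▸ hL.root_mem)
  obtain ⟨y, hy, hyL⟩ := hL.exists_cons hc (hreach c hcp)
  have hlength : (y :: L).length ≤ L.length :=
    hmax ⟨hyL, hnodup.cons hy⟩ (L.length.le_add_right 1)
  exact L.length.not_succ_le_self hlength

end IsReverseSearch

end Agenda

section Profile

variable {α : Type*} {n : ℕ} {prof : Fin n → α → α → Prop}

theorem le_prefCount_add_prefCount (hprof : ∀ i, Std.Trichotomous (prof i)) {b c : α}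
    (hbc : b ≠ c) : n ≤ prefCount prof b c + prefCount prof c b := by
  have hall : (Finset.univ.filter fun i => prof i b c ∨ prof i c b) = Finset.univ :=
    Finset.filter_true_of_mem fun i _ => or_iff_not_imp_left.2 fun h₁ =>
      by_contra fun h₂ => hbc ((hprof i).trichotomous b c h₁ h₂)
  calc n = (Finset.univ.filter fun i => prof i b c ∨ prof i c b).card := by
        rw [hall, Finset.card_fin]
    _ ≤ prefCount prof b c + prefCount prof c b := by
        rw [Finset.filter_or]
        exact Finset.card_union_le _ _

theorem Beats.trichotomous (hodd : Odd n) (hprof : ∀ i, Std.Trichotomous (prof i)) :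
    Std.Trichotomous (Beats prof) where
  trichotomous b c hbc hcb := by
    by_contra hne
    have hcount := le_prefCount_add_prefCount hprof hne
    obtain ⟨k, rfl⟩ := hodd
    unfold Beats at hbc hcb
    omega

theorem amendWinner_cons (a : α) (L : List α) :
    amendWinner prof (a :: L) = some (L.foldl (roundWinner (Beats prof)) a) :=
  rfl

theorem transGen_beats_of_amendWinner_eq [Std.Trichotomous (Beats prof)] {L : List α} {p c : α}
    (hp : amendWinner prof L = some p) (hc : c ∈ L) (hcp : c ≠ p) :
    Relation.TransGen (Beats prof) p c := by
  cases L with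
  | nil => exact absurd hc List.not_mem_nil
  | cons a L =>
    rw [amendWinner_cons, Option.some_inj] at hp
    have hreach : Relation.ReflTransGen (Beats prof) p c := hp ▸ reflTransGen_foldl_roundWinner hc
    exact (Relation.reflTransGen_iff_eq_or_transGen.1 hreach).resolve_left hcp

theorem IsReverseSearch.amendWinner_eq {p : α} {L : List α}
    (hL : IsReverseSearch (Beats prof) p L) : amendWinner prof L = some p := by
  cases hL with
  | root => rfl
  | cons hL hx hxy => rw [amendWinner_cons, hL.foldl_roundWinner hx hxy]

end Profile

theorem stmt3_general {α : Type*} [Finite α] {n : ℕ} (prof : Fin n → α → α → Prop)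
    [Std.Trichotomous (Beats prof)] (p : α) :
    (∃ L : List α, L.Nodup ∧ (∀ a : α, a ∈ L) ∧ amendWinner prof L = some p) ↔
    (∀ c : α, c ≠ p → Relation.TransGen (Beats prof) p c) := by
  constructor
  · rintro ⟨L, -, hall, hp⟩ c hcp
    exact transGen_beats_of_amendWinner_eq hp (hall c) hcp
  · intro hreach
    obtain ⟨L, hL, hnodup, hall⟩ := IsReverseSearch.exists_nodup_forall_mem hreach
    exact ⟨L, hnodup, hall, hL.amendWinner_eq⟩

/-- With an odd number of voters, there is an agenda under which `p` is the amendment winner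
iff every other alternative is reachable from `p` by a directed path in the majority
tournament (i.e., by a nonempty chain of `Beats` steps). -/
theorem stmt3 {α : Type*} [Fintype α] [DecidableEq α] {n : ℕ} (hodd : Odd n)
    (prof : Fin n → α → α → Prop)
    (hlin : ∀ i, IsStrictTotalOrder α (prof i))
    (p : α) :
    (∃ L : List α, L.Nodup ∧ (∀ a : α, a ∈ L) ∧ amendWinner prof L = some p) ↔
    (∀ c : α, c ≠ p → Relation.TransGen (Beats prof) p c) := by
  have := Beats.trichotomous hodd fun i => (hlin i).toTrichotomous
  exact stmt3_general prof p
end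

section
/- Let P be a preference profile with linear preference orders over a finite set A of m alternatives with an odd number n of voters, and let L = a_1 ▷ a_2 ▷ … ▷ a_m be an agenda such that for every i ∈ {2, …, m}, alternative a_i beats a_{i−1}. Then a_m is the amendment winner of P under L. In particular, if a Hamiltonian cycle of the majority tournament is traversed in reverse orientation starting at the predecessor of p and ending at p, the resulting agenda makes p the amendment winner. -/
open scoped Classical

theorem foldl_eq_getLast_of_isChain {α : Type*} {f : α → α → α} {a : α} {l : List α}
    (h : (a :: l).IsChain fun x y => f x y = y) :
    l.foldl f a = (a :: l).getLast (List.cons_ne_nil a l) := by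
  induction l generalizing a with
  | nil => rfl
  | cons b l ih =>
    obtain ⟨hab, hbl⟩ := List.isChain_cons_cons.mp h
    rw [List.foldl_cons, hab, List.getLast_cons_cons]
    exact ih hbl

theorem stmt4_general {α : Type*} {n : ℕ} {prof : Fin n → α → α → Prop} {L : List α}
    (hchain : L.IsChain fun x y => Beats prof y x) :
    amendWinner prof L = L.getLast? := by
  cases L with
  | nil => rfl
  | cons a l =>
    have htake : (a :: l).IsChain fun x y => (if Beats prof y x then y else x) = y :=
      hchain.imp fun _ _ hbeats => if_pos hbeats
    rw [amendWinner, foldl_eq_getLast_of_isChain htake, ← List.getLast?_eq_some_getLast]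

/-- If in the agenda `L = a_1 ▷ … ▷ a_m` every alternative beats its predecessor,
then the last alternative of the agenda is the amendment winner. -/
theorem stmt4 {α : Type*} [Fintype α] [DecidableEq α] {n : ℕ} (hodd : Odd n)
    (prof : Fin n → α → α → Prop)
    (hlin : ∀ i, IsStrictTotalOrder α (prof i))
    (L : List α) (hnodup : L.Nodup) (hcomplete : ∀ a : α, a ∈ L)
    (hchain : L.Chain' (fun x y => Beats prof y x))
    (p : α) (hlast : L.getLast? = some p) :
    amendWinner prof L = some p :=
  (stmt4_general hchain).trans hlast
end

section
/- Let P be a preference profile with linear preference orders over a finite set A of alternatives with an odd number n of voters. If p ∈ A is a Condorcet winner of P, that is, p beats every other alternative, then p is the amendment winner of P under every agenda over A. -/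
open scoped Classical

/-! Two opposite majorities would have a voter in common, so an alternative that `p` beats cannot
beat `p`. When `p` comes up on the agenda it therefore defeats the incumbent, if there is one, and
no later challenger can replace it. -/

section AmendWinner

variable {α : Type*} {n : ℕ} {prof : Fin n → α → α → Prop}

theorem prefCount_add_prefCount_swap_le (prof : Fin n → α → α → Prop)
    [∀ i, Std.Asymm (prof i)] (b c : α) :
    prefCount prof b c + prefCount prof c b ≤ n := by
  have disjoint_supporters : Disjoint (Finset.univ.filter fun i => prof i b c)
      (Finset.univ.filter fun i => prof i c b) :=
    Finset.disjoint_filter.mpr fun _ _ hbc hcb => asymm hbc hcb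
  calc
    prefCount prof b c + prefCount prof c b
        = ((Finset.univ.filter fun i => prof i b c) ∪
            Finset.univ.filter fun i => prof i c b).card :=
      (Finset.card_union_of_disjoint disjoint_supporters).symm
    _ ≤ n := card_finset_fin_le _

theorem Beats.asymm [∀ i, Std.Asymm (prof i)] {b c : α} (hbc : Beats prof b c) :
    ¬ Beats prof c b := by
  have votes_le := prefCount_add_prefCount_swap_le prof b c
  unfold Beats at hbc ⊢
  omega

theorem amendWinner_cons_cons (prof : Fin n → α → α → Prop) (a b : α) (L : List α) :
    amendWinner prof (a :: b :: L) =
      amendWinner prof ((if Beats prof b a then b else a) :: L) :=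
  rfl

theorem exists_mem_amendWinner_eq_some (prof : Fin n → α → α → Prop) {L : List α}
    (hL : L ≠ []) : ∃ w ∈ L, amendWinner prof L = some w := by
  obtain ⟨a, L, rfl⟩ := List.exists_cons_of_ne_nil hL
  induction L generalizing a with
  | nil => exact ⟨a, List.mem_singleton_self a, rfl⟩
  | cons b L ih =>
    obtain ⟨w, hw, hwin⟩ := ih (if Beats prof b a then b else a) (List.cons_ne_nil _ _)
    exact ⟨w, by grind, hwin⟩

theorem amendWinner_append {L : List α} {w : α} (hw : amendWinner prof L = some w)
    (M : List α) : amendWinner prof (L ++ M) = amendWinner prof (w :: M) := by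
  cases L with
  | nil => cases hw
  | cons a L =>
    cases hw
    exact congrArg some List.foldl_append

theorem amendWinner_cons_of_forall_not_beats {p : α} {L : List α}
    (hL : ∀ c ∈ L, ¬ Beats prof c p) : amendWinner prof (p :: L) = some p := by
  induction L with
  | nil => rfl
  | cons b L ih =>
    rw [List.forall_mem_cons] at hL
    rw [amendWinner_cons_cons, if_neg hL.1, ih hL.2]

theorem stmt5_general [∀ i, Std.Asymm (prof i)] {p : α} {L : List α} (hp : p ∈ L)
    (hcond : ∀ c ∈ L, c ≠ p → Beats prof p c) : amendWinner prof L = some p := by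
  obtain ⟨s, t, rfl, hps⟩ := List.eq_append_cons_of_mem hp
  have p_survives : amendWinner prof (p :: t) = some p :=
    amendWinner_cons_of_forall_not_beats fun c hc hcp => by
      obtain rfl | hne := eq_or_ne c p
      · exact hcp.asymm hcp
      · exact (hcond c (by simp [hc]) hne).asymm hcp
  obtain rfl | hs := eq_or_ne s []
  · exact p_survives
  obtain ⟨w, hws, hw⟩ := exists_mem_amendWinner_eq_some prof hs
  have p_beats_incumbent : Beats prof p w :=
    hcond w (List.mem_append_left _ hws) (ne_of_mem_of_not_mem hws hps)
  rw [amendWinner_append hw, amendWinner_cons_cons, if_pos p_beats_incumbent, p_survives]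

end AmendWinner

/-- With an odd number of voters, a Condorcet winner is the amendment winner
under every agenda. -/
theorem stmt5 {α : Type*} [Fintype α] [DecidableEq α] {n : ℕ} (hodd : Odd n)
    (prof : Fin n → α → α → Prop)
    (hlin : ∀ i, IsStrictTotalOrder α (prof i))
    (p : α) (hcond : ∀ c : α, c ≠ p → Beats prof p c) :
    ∀ L : List α, L.Nodup → (∀ a : α, a ∈ L) → amendWinner prof L = some p := by
  intro L _ hL
  exact stmt5_general (hL p) fun c _ => hcond c
end

section
/- For both the successive and the amendment procedure the following holds. Let P be a preference profile with linear preference orders over a finite set A of alternatives (each original voter having weight 1), let L be an agenda over A, let p ∈ A, and let w ≥ 1 be an integer. There exist additional voters with linear orders over A and positive integer weights summing to w whose addition to P makes p the winner under L (with majorities counted by weight) if and only if there exist w additional unweighted voters (weight 1 each) whose addition to P makes p the winner under L. -/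
open scoped Classical

/-- The total weight of the voters in weighted profile `(w, prof)` preferring `b` to `c`. -/
noncomputable def wPrefCount {α : Type*} {n : ℕ} (w : Fin n → ℕ)
    (prof : Fin n → α → α → Prop) (b c : α) : ℕ :=
  ∑ i ∈ Finset.univ.filter (fun i => prof i b c), w i

/-- `b` beats `c` by weighted majority. -/
def WBeats {α : Type*} {n : ℕ} (w : Fin n → ℕ) (prof : Fin n → α → α → Prop)
    (b c : α) : Prop :=
  2 * wPrefCount w prof b c > ∑ i, w i

/-- `a` is a weighted `S`-majority winner: the voters preferring `a` to every alternative
of `S \ {a}` have total weight more than half of the total weight. -/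
def WIsMajWinner {α : Type*} {n : ℕ} (w : Fin n → ℕ) (prof : Fin n → α → α → Prop)
    (S : Finset α) (a : α) : Prop :=
  2 * (∑ i ∈ Finset.univ.filter (fun i => ∀ c ∈ S, c ≠ a → prof i a c), w i) > ∑ i, w i

/-- The weighted successive winner for the agenda given as a list. -/
noncomputable def wSuccWinner {α : Type*} [DecidableEq α] {n : ℕ} (w : Fin n → ℕ)
    (prof : Fin n → α → α → Prop) : List α → Option α
  | [] => none
  | a :: rest =>
    if WIsMajWinner w prof ((a :: rest).toFinset) a then some a
    else wSuccWinner w prof rest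

/-- The weighted amendment winner for the agenda given as a list. -/
noncomputable def wAmendWinner {α : Type*} {n : ℕ} (w : Fin n → ℕ)
    (prof : Fin n → α → α → Prop) : List α → Option α
  | [] => none
  | a :: rest => some (rest.foldl (fun win c => if WBeats w prof c win then c else win) a)

/-!
A voter of weight `w` has the same influence as `w` voters of weight `1` with the same ballot: both
procedures look only at the multiset in which each ballot occurs as often as its weight, and every
multiset of `wtot` ballots is the multiset of the ballots of `wtot` voters of weight `1`.
-/

section WeightedBallots

variable {ι β : Type*} [Fintype ι]

/-- The multiset of ballots of a weighted profile: the ballot `b i` of voter `i` is counted with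
multiplicity `w i`. It carries everything a majority rule can see of the profile. Ballots are of an
arbitrary type, not only linear orders. -/
def weightedBallots (w : ι → ℕ) (b : ι → β) : Multiset β :=
  ∑ i, w i • {b i}

theorem card_weightedBallots (w : ι → ℕ) (b : ι → β) :
    (weightedBallots w b).card = ∑ i, w i := by
  simp [weightedBallots]

theorem countP_weightedBallots (w : ι → ℕ) (b : ι → β) (Q : β → Prop) [DecidablePred Q] :
    (weightedBallots w b).countP Q = ∑ i with Q (b i), w i := by
  rw [weightedBallots, ← Multiset.coe_countPAddMonoidHom, map_sum, Finset.sum_filter]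
  refine Finset.sum_congr rfl fun i _ => ?_
  simp [← Multiset.cons_zero, Multiset.countP_cons]

theorem exists_eq_of_mem_weightedBallots {w : ι → ℕ} {b : ι → β} {r : β}
    (hr : r ∈ weightedBallots w b) : ∃ i, b i = r := by
  obtain ⟨i, -, hi⟩ := Multiset.mem_sum.1 hr
  exact ⟨i, (Multiset.mem_singleton.1 (Multiset.mem_of_mem_nsmul hi)).symm⟩

theorem weightedBallots_append {n k : ℕ} (v : Fin n → ℕ) (w : Fin k → ℕ) (a : Fin n → β)
    (b : Fin k → β) :
    weightedBallots (Fin.append v w) (Fin.append a b) =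
      weightedBallots v a + weightedBallots w b := by
  simp only [weightedBallots, Fin.sum_univ_add, Fin.append_left, Fin.append_right]

theorem weightedBallots_one (b : ι → β) :
    weightedBallots (fun _ => 1) b = Finset.univ.val.map b := by
  simpa only [weightedBallots, one_nsmul, Finset.sum, Multiset.map_map, Function.comp_def] using
    Multiset.sum_map_singleton (Finset.univ.val.map b)

theorem exists_weightedBallots_one_eq (M : Multiset β) {t : ℕ} (ht : M.card = t) :
    ∃ c : Fin t → β, weightedBallots (fun _ => 1) c = M := by
  obtain ⟨l, rfl⟩ : ∃ l : List β, ↑l = M := ⟨M.toList, M.coe_toList⟩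
  rw [Multiset.coe_card] at ht
  subst ht
  exact ⟨l.get, by rw [weightedBallots_one, Fin.univ_val_map, List.ofFn_get]⟩

theorem exists_unit_weight_clones (w : ι → ℕ) (b : ι → β) :
    ∃ c : Fin (∑ i, w i) → β,
      weightedBallots (fun _ => 1) c = weightedBallots w b ∧ ∀ j, ∃ i, b i = c j := by
  obtain ⟨c, hc⟩ := exists_weightedBallots_one_eq _ (card_weightedBallots w b)
  refine ⟨c, hc, fun j => exists_eq_of_mem_weightedBallots (w := w) ?_⟩
  rw [← hc, weightedBallots_one]
  exact Multiset.mem_map_of_mem c (Finset.mem_univ j)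

end WeightedBallots

section BallotDetermined

/-- A procedure, here a map `F` from weighted profiles of any number of voters to outcomes, is
ballot-determined if the outcome depends only on the multiset of ballots, and so not on how the
weight of a ballot is distributed among the voters casting it. -/
def BallotDetermined {β X : Type*} (F : ∀ m : ℕ, (Fin m → ℕ) → (Fin m → β) → X) : Prop :=
  ∀ ⦃m m' : ℕ⦄ (w : Fin m → ℕ) (w' : Fin m' → ℕ) (b : Fin m → β) (b' : Fin m' → β),
    weightedBallots w b = weightedBallots w' b' → F m w b = F m' w' b'

variable {α : Type*}

theorem wBeats_iff_countP {m : ℕ} (w : Fin m → ℕ) (P : Fin m → α → α → Prop) (b c : α) :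
    WBeats w P b c ↔
      (weightedBallots w P).card < 2 * (weightedBallots w P).countP (fun r => r b c) := by
  rw [card_weightedBallots, countP_weightedBallots]
  rfl

theorem wIsMajWinner_iff_countP {m : ℕ} (w : Fin m → ℕ) (P : Fin m → α → α → Prop)
    (S : Finset α) (a : α) :
    WIsMajWinner w P S a ↔
      (weightedBallots w P).card <
        2 * (weightedBallots w P).countP (fun r => ∀ c ∈ S, c ≠ a → r a c) := by
  rw [card_weightedBallots, countP_weightedBallots]
  rfl

theorem ballotDetermined_wSuccWinner [DecidableEq α] (L : List α) :
    BallotDetermined fun _ w P => wSuccWinner w P L := by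
  intro m m' w w' P P' h
  have hmaj (S : Finset α) (a : α) : WIsMajWinner w P S a ↔ WIsMajWinner w' P' S a := by
    rw [wIsMajWinner_iff_countP, wIsMajWinner_iff_countP, h]
  induction L with
  | nil => rfl
  | cons a rest ih => simp only [wSuccWinner, hmaj, ih]

theorem ballotDetermined_wAmendWinner (L : List α) :
    BallotDetermined fun _ w P => wAmendWinner w P L := by
  intro m m' w w' P P' h
  have hbeats (b c : α) : WBeats w P b c ↔ WBeats w' P' b c := by
    rw [wBeats_iff_countP, wBeats_iff_countP, h]
  cases L with
  | nil => rfl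
  | cons a rest => simp only [wAmendWinner, hbeats]

end BallotDetermined

theorem fin_append_const {γ : Type*} {n k : ℕ} (x : γ) :
    Fin.append (fun _ : Fin n => x) (fun _ : Fin k => x) = fun _ => x :=
  Fin.append_castAdd_natAdd (f := fun _ => x)

theorem stmt9_general {β X : Type*} {F : ∀ m : ℕ, (Fin m → ℕ) → (Fin m → β) → X}
    (hF : BallotDetermined F) {n : ℕ} (v : Fin n → ℕ) (b : Fin n → β) (D : β → Prop) (x : X)
    (wtot : ℕ) :
    (∃ k : ℕ, ∃ man : Fin k → β, ∃ mw : Fin k → ℕ,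
        (∀ j, D (man j)) ∧ (∀ j, 0 < mw j) ∧ (∑ j, mw j) = wtot ∧
        F (n + k) (Fin.append v mw) (Fin.append b man) = x) ↔
      (∃ man : Fin wtot → β, (∀ j, D (man j)) ∧
        F (n + wtot) (Fin.append v fun _ => 1) (Fin.append b man) = x) := by
  constructor
  · rintro ⟨k, man, mw, hD, -, rfl, hx⟩
    obtain ⟨clone, hclone, hmem⟩ := exists_unit_weight_clones mw man
    refine ⟨clone, fun j => ?_, ?_⟩
    · obtain ⟨i, hi⟩ := hmem j
      exact hi ▸ hD i
    · rw [← hx]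
      apply hF
      rw [weightedBallots_append, weightedBallots_append, hclone]
  · rintro ⟨man, hD, hx⟩
    exact ⟨wtot, man, fun _ => 1, hD, fun _ => one_pos, by simp, hx⟩

/-- For both the successive and the amendment procedure: there is a weighted manipulation
(additional voters with positive integer weights summing to `wtot`) making `p` win under
`L` iff there is an unweighted manipulation by `wtot` voters (weight `1` each) making `p`
win under `L`, where the original voters all have weight `1`. -/
theorem stmt9 {α : Type*} [Fintype α] [DecidableEq α] {n : ℕ}
    (prof : Fin n → α → α → Prop)
    (hlin : ∀ i, IsStrictTotalOrder α (prof i))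
    (L : List α) (hnodup : L.Nodup) (hcomplete : ∀ a : α, a ∈ L)
    (p : α) (wtot : ℕ) (hwtot : 1 ≤ wtot) :
    ((∃ k : ℕ, ∃ man : Fin k → α → α → Prop, ∃ mw : Fin k → ℕ,
        (∀ j, IsStrictTotalOrder α (man j)) ∧ (∀ j, 0 < mw j) ∧ (∑ j, mw j) = wtot ∧
        wSuccWinner (Fin.append (fun _ : Fin n => 1) mw) (Fin.append prof man) L = some p) ↔
      (∃ man : Fin wtot → α → α → Prop, (∀ j, IsStrictTotalOrder α (man j)) ∧
        wSuccWinner (fun _ : Fin (n + wtot) => 1) (Fin.append prof man) L = some p)) ∧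
    ((∃ k : ℕ, ∃ man : Fin k → α → α → Prop, ∃ mw : Fin k → ℕ,
        (∀ j, IsStrictTotalOrder α (man j)) ∧ (∀ j, 0 < mw j) ∧ (∑ j, mw j) = wtot ∧
        wAmendWinner (Fin.append (fun _ : Fin n => 1) mw) (Fin.append prof man) L = some p) ↔
      (∃ man : Fin wtot → α → α → Prop, (∀ j, IsStrictTotalOrder α (man j)) ∧
        wAmendWinner (fun _ : Fin (n + wtot) => 1) (Fin.append prof man) L = some p)) := by
  rw [← fin_append_const 1]
  exact ⟨stmt9_general (ballotDetermined_wSuccWinner L) _ prof (IsStrictTotalOrder α) _ wtot,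
    stmt9_general (ballotDetermined_wAmendWinner L) _ prof (IsStrictTotalOrder α) _ wtot⟩
end

section
/- Let x_1, …, x_r be positive integers with x_1 + … + x_r = 2K. Consider the weighted partial profile over the alternatives A = {p, a, b} with: for each i, a number voter v_i of weight x_i whose strict partial order consists only of a ≻ p (b is incomparable to both a and p); and one dummy voter of weight 1 with the linear order p ≻ b ≻ a. Let the agenda be L: a ▷ b ▷ p. Then there is a partition of the multiset {x_1, …, x_r} into two parts each summing to K if and only if there is a completion of the number voters' partial orders to linear orders under which p is the weighted successive winner under L. -/
open scoped Classical

/-- The three alternatives `p`, `a`, `b` of the Partition reduction. -/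
inductive Alt3 : Type
  | A : Alt3
  | B : Alt3
  | P : Alt3
  deriving DecidableEq

/-- The partial order of every number voter: only `a ≻ p`. -/
def numVoter : Alt3 → Alt3 → Prop := fun x y => x = Alt3.A ∧ y = Alt3.P

/-- The linear order `p ≻ b ≻ a` of the dummy voter. -/
def dummyVoter : Alt3 → Alt3 → Prop := fun x y =>
  match x, y with
  | Alt3.P, Alt3.B => True
  | Alt3.P, Alt3.A => True
  | Alt3.B, Alt3.A => True
  | _, _ => False

/-- The partial profile of the reduction: `r` number voters followed by one dummy voter. -/
def profile17 (r : ℕ) : Fin (r + 1) → Alt3 → Alt3 → Prop := fun idx =>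
  if (idx : ℕ) < r then numVoter else dummyVoter

/-- The weights of the reduction: number voter `v_i` has weight `x_i`,
the dummy voter has weight `1`. -/
def weights17 (r : ℕ) (x : Fin r → ℕ) : Fin (r + 1) → ℕ := fun idx =>
  if hi : (idx : ℕ) < r then x ⟨idx, hi⟩ else 1

/-! A number voter, ranking `a` above `p`, must rank `a` above `b` or `b` above `p`, while the dummy
voter supports neither `a` at the first stage nor `b` at the second. Out of a total weight `2K + 1`,
the procedure passes over `a` iff the number voters with `a ≻ b` weigh at most `K`, and over `b` iff
those with `b ≻ p` do. As these two groups cover a total of `2K`, each weighs exactly `K`.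
Conversely, from a part of sum `K`, let its voters vote `a ≻ p ≻ b` and the others `b ≻ a ≻ p`. -/

theorem sum_eq_of_add_self_le_sum_union {ι M : Type*} [DecidableEq ι] [AddCommMonoid M]
    [PartialOrder M] [IsOrderedCancelAddMonoid M] [CanonicallyOrderedAdd M] {f : ι → M} {k : M}
    {s t : Finset ι} (h : k + k ≤ ∑ i ∈ s ∪ t, f i) (hs : ∑ i ∈ s, f i ≤ k)
    (ht : ∑ i ∈ t, f i ≤ k) : ∑ i ∈ s, f i = k := by
  refine hs.antisymm (le_of_add_le_add_right (a := k) ?_)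
  calc k + k ≤ ∑ i ∈ s ∪ t, f i := h
    _ ≤ ∑ i ∈ s ∪ t, f i + ∑ i ∈ s ∩ t, f i := le_self_add
    _ = ∑ i ∈ s, f i + ∑ i ∈ t, f i := Finset.sum_union_inter
    _ ≤ ∑ i ∈ s, f i + k := by gcongr

section SuccessiveProcedure

variable {α : Type*} [DecidableEq α] {n : ℕ} {w : Fin n → ℕ} {prof : Fin n → α → α → Prop}

theorem wSuccWinner_singleton (hw : 0 < ∑ i, w i) (a : α) : wSuccWinner w prof [a] = some a := by
  have h : WIsMajWinner w prof [a].toFinset a := by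
    simpa [WIsMajWinner, two_mul] using hw
  rw [wSuccWinner, if_pos h]

theorem wSuccWinner_cons_eq_some_iff {a c : α} (hac : a ≠ c) (l : List α) :
    wSuccWinner w prof (a :: l) = some c ↔
      ¬ WIsMajWinner w prof (a :: l).toFinset a ∧ wSuccWinner w prof l = some c := by
  rw [wSuccWinner]
  split_ifs with h
  · exact iff_of_false (Option.some_injective α |>.ne hac) fun hl => hl.1 h
  · exact (and_iff_right h).symm

end SuccessiveProcedure

section Completion

variable {α : Type*} {n : ℕ}

/-- The profile `comp` of linear orders is a completion of the partial profile `prof`. -/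
def IsCompletion (prof comp : Fin n → α → α → Prop) : Prop :=
  ∀ i, IsStrictTotalOrder α (comp i) ∧ ∀ a b, prof i a b → comp i a b

theorem IsCompletion.not_of_rel {prof comp : Fin n → α → α → Prop}
    (hc : IsCompletion prof comp) {i : Fin n} {a b : α} (hab : prof i a b) : ¬ comp i b a :=
  have := (hc i).1
  asymm_of (comp i) ((hc i).2 a b hab)

/-- The preference order of a voter who lists the alternatives from best to worst. Alternatives
missing from the list are tied at the bottom. -/
def ballot [DecidableEq α] (l : List α) (a b : α) : Prop :=
  l.idxOf a < l.idxOf b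

instance [DecidableEq α] (l : List α) : DecidableRel (ballot l) :=
  fun a b => inferInstanceAs (Decidable (l.idxOf a < l.idxOf b))

theorem isStrictTotalOrder_ballot [DecidableEq α] {l : List α} (hl : ∀ a, a ∈ l) :
    IsStrictTotalOrder α (ballot l) :=
  have idxOf_injective : Function.Injective (l.idxOf ·) := fun a _ h => (List.idxOf_inj (hl a)).1 h
  (RelEmbedding.preimage ⟨_, idxOf_injective⟩ (· < ·)).isStrictTotalOrder

end Completion

section Reduction

variable {r : ℕ}

theorem profile17_castSucc (i : Fin r) : profile17 r i.castSucc = numVoter := by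
  simp [profile17]

theorem profile17_last : profile17 r (Fin.last r) = dummyVoter := by
  simp [profile17]

theorem weights17_castSucc (x : Fin r → ℕ) (i : Fin r) : weights17 r x i.castSucc = x i := by
  simp [weights17]

theorem weights17_last (x : Fin r → ℕ) : weights17 r x (Fin.last r) = 1 := by
  simp [weights17]

theorem sum_weights17 (x : Fin r → ℕ) : ∑ i, weights17 r x i = ∑ i, x i + 1 := by
  simp only [Fin.sum_univ_castSucc, weights17_castSucc, weights17_last]

theorem wIsMajWinner_weights17_iff {α : Type*} {K : ℕ} {x : Fin r → ℕ}
    (hsum : ∑ i, x i = 2 * K) {prof : Fin (r + 1) → α → α → Prop} {S : Finset α} {a : α}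
    (hlast : ¬ ∀ c ∈ S, c ≠ a → prof (Fin.last r) a c) :
    WIsMajWinner (weights17 r x) prof S a ↔
      K < ∑ i with ∀ c ∈ S, c ≠ a → prof (Fin.castSucc i) a c, x i := by
  rw [WIsMajWinner, sum_weights17, hsum, Finset.sum_filter, Fin.sum_univ_castSucc, if_neg hlast]
  simp only [weights17_castSucc, ← Finset.sum_filter]
  omega

namespace IsCompletion

variable {comp : Fin (r + 1) → Alt3 → Alt3 → Prop}

theorem castSucc_A_P (hc : IsCompletion (profile17 r) comp) (i : Fin r) :
    comp i.castSucc Alt3.A Alt3.P :=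
  (hc i.castSucc).2 _ _ (by simp [profile17_castSucc, numVoter])

theorem not_last_A_B (hc : IsCompletion (profile17 r) comp) :
    ¬ comp (Fin.last r) Alt3.A Alt3.B :=
  hc.not_of_rel (by simp [profile17_last, dummyVoter])

theorem not_last_B_P (hc : IsCompletion (profile17 r) comp) :
    ¬ comp (Fin.last r) Alt3.B Alt3.P :=
  hc.not_of_rel (by simp [profile17_last, dummyVoter])

theorem castSucc_A_B_or_B_P (hc : IsCompletion (profile17 r) comp) (i : Fin r) :
    comp i.castSucc Alt3.A Alt3.B ∨ comp i.castSucc Alt3.B Alt3.P := by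
  have := (hc i.castSucc).1
  rcases trichotomous_of (comp i.castSucc) Alt3.A Alt3.B with hAB | hAB | hBA
  · exact .inl hAB
  · nomatch hAB
  · exact .inr (trans_of (comp i.castSucc) hBA (hc.castSucc_A_P i))

theorem wSuccWinner_eq_some_P_iff (hc : IsCompletion (profile17 r) comp) {K : ℕ}
    {x : Fin r → ℕ} (hsum : ∑ i, x i = 2 * K) :
    wSuccWinner (weights17 r x) comp [Alt3.A, Alt3.B, Alt3.P] = some Alt3.P ↔
      ∑ i with comp (Fin.castSucc i) Alt3.A Alt3.B, x i ≤ K ∧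
        ∑ i with comp (Fin.castSucc i) Alt3.B Alt3.P, x i ≤ K := by
  have hA : WIsMajWinner (weights17 r x) comp [Alt3.A, Alt3.B, Alt3.P].toFinset Alt3.A ↔
      K < ∑ i with comp (Fin.castSucc i) Alt3.A Alt3.B, x i := by
    rw [wIsMajWinner_weights17_iff hsum (by simp [hc.not_last_A_B])]
    simp [hc.castSucc_A_P]
  have hB : WIsMajWinner (weights17 r x) comp [Alt3.B, Alt3.P].toFinset Alt3.B ↔
      K < ∑ i with comp (Fin.castSucc i) Alt3.B Alt3.P, x i := by
    rw [wIsMajWinner_weights17_iff hsum (by simp [hc.not_last_B_P])]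
    simp
  have hpos : 0 < ∑ i, weights17 r x i := by simp [sum_weights17]
  rw [wSuccWinner_cons_eq_some_iff (by decide : Alt3.A ≠ Alt3.P), hA, not_lt,
    wSuccWinner_cons_eq_some_iff (by decide : Alt3.B ≠ Alt3.P), hB, not_lt,
    wSuccWinner_singleton hpos, and_iff_left rfl]

theorem sum_A_B_eq_of_wSuccWinner (hc : IsCompletion (profile17 r) comp) {K : ℕ}
    {x : Fin r → ℕ} (hsum : ∑ i, x i = 2 * K)
    (hP : wSuccWinner (weights17 r x) comp [Alt3.A, Alt3.B, Alt3.P] = some Alt3.P) :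
    ∑ i with comp (Fin.castSucc i) Alt3.A Alt3.B, x i = K := by
  obtain ⟨hAB, hBP⟩ := (hc.wSuccWinner_eq_some_P_iff hsum).1 hP
  refine sum_eq_of_add_self_le_sum_union ?_ hAB hBP
  rw [← Finset.filter_or, Finset.filter_true_of_mem fun i _ => hc.castSucc_A_B_or_B_P i, hsum,
    two_mul]

end IsCompletion

/-- The completion of `profile17 r` induced by a part `S` of the number voters: those in `S` vote
`a ≻ p ≻ b`, the others `b ≻ a ≻ p`. -/
def partCompletion (S : Finset (Fin r)) : Fin (r + 1) → Alt3 → Alt3 → Prop :=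
  Fin.lastCases (ballot [Alt3.P, Alt3.B, Alt3.A]) fun i =>
    if i ∈ S then ballot [Alt3.A, Alt3.P, Alt3.B] else ballot [Alt3.B, Alt3.A, Alt3.P]

theorem partCompletion_last (S : Finset (Fin r)) :
    partCompletion S (Fin.last r) = ballot [Alt3.P, Alt3.B, Alt3.A] :=
  Fin.lastCases_last

theorem partCompletion_castSucc (S : Finset (Fin r)) (i : Fin r) :
    partCompletion S i.castSucc =
      if i ∈ S then ballot [Alt3.A, Alt3.P, Alt3.B] else ballot [Alt3.B, Alt3.A, Alt3.P] :=
  Fin.lastCases_castSucc i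

theorem partCompletion_castSucc_A_B_iff (S : Finset (Fin r)) (i : Fin r) :
    partCompletion S i.castSucc Alt3.A Alt3.B ↔ i ∈ S := by
  rw [partCompletion_castSucc]
  split_ifs with hi
  · exact iff_of_true (by decide) hi
  · exact iff_of_false (by decide) hi

theorem partCompletion_castSucc_B_P_iff (S : Finset (Fin r)) (i : Fin r) :
    partCompletion S i.castSucc Alt3.B Alt3.P ↔ i ∉ S := by
  rw [partCompletion_castSucc]
  split_ifs with hi
  · exact iff_of_false (by decide) (not_not_intro hi)
  · exact iff_of_true (by decide) hi

theorem isCompletion_partCompletion (S : Finset (Fin r)) :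
    IsCompletion (profile17 r) (partCompletion S) := by
  intro i
  cases i using Fin.lastCases with
  | last =>
    rw [partCompletion_last, profile17_last]
    refine ⟨isStrictTotalOrder_ballot (by rintro ⟨⟩ <;> decide), ?_⟩
    rintro ⟨⟩ ⟨⟩ <;> simp [dummyVoter, ballot]
  | cast i =>
    rw [partCompletion_castSucc, profile17_castSucc]
    split_ifs <;>
      exact ⟨isStrictTotalOrder_ballot (by rintro ⟨⟩ <;> decide), by rintro _ _ ⟨rfl, rfl⟩; decide⟩

theorem wSuccWinner_partCompletion {K : ℕ} {x : Fin r → ℕ} (hsum : ∑ i, x i = 2 * K)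
    {S : Finset (Fin r)} (hS : ∑ i ∈ S, x i = K) :
    wSuccWinner (weights17 r x) (partCompletion S) [Alt3.A, Alt3.B, Alt3.P] = some Alt3.P := by
  have hSc : ∑ i ∈ Sᶜ, x i = K := by
    have := Finset.sum_add_sum_compl S x
    omega
  rw [(isCompletion_partCompletion S).wSuccWinner_eq_some_P_iff hsum]
  simp only [partCompletion_castSucc_A_B_iff, partCompletion_castSucc_B_P_iff,
    Finset.filter_notMem_eq_sdiff, Finset.filter_univ_mem, ← Finset.compl_eq_univ_sdiff]
  exact ⟨hS.le, hSc.le⟩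

end Reduction

/-- The multiset `{x_1, …, x_r}` (summing to `2K`) has a partition into two parts each
summing to `K` iff some completion of the number voters' partial orders makes `p` the
weighted successive winner under the agenda `a ▷ b ▷ p`. -/
theorem stmt17 (r K : ℕ) (x : Fin r → ℕ) (hx : ∀ i, 0 < x i)
    (hsum : ∑ i, x i = 2 * K) :
    (∃ S : Finset (Fin r), ∑ i ∈ S, x i = K) ↔
    (∃ comp : Fin (r + 1) → Alt3 → Alt3 → Prop,
      (∀ idx, IsStrictTotalOrder Alt3 (comp idx) ∧
        ∀ a b, profile17 r idx a b → comp idx a b) ∧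
      wSuccWinner (weights17 r x) comp [Alt3.A, Alt3.B, Alt3.P] = some Alt3.P) := by
  constructor
  · rintro ⟨S, hS⟩
    exact ⟨partCompletion S, isCompletion_partCompletion S, wSuccWinner_partCompletion hsum hS⟩
  · rintro ⟨comp, hc, hP⟩
    exact ⟨_, IsCompletion.sum_A_B_eq_of_wSuccWinner hc hsum hP⟩
end

section
/- Let P be a weighted partial profile over a set A of at most three alternatives, where each voter i has a strict partial order over A and a positive integer weight, and let W be the total weight, assumed odd. Let L be an agenda in which alternative p occupies the first or the second position. Then p is the weighted amendment winner under L in every completion of P if and only if for every alternative c ∈ A ∖ {p}, the voters whose partial order already ranks p above c have total weight greater than W/2 (equivalently, p beats c in every completion of P). -/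
open scoped Classical

/-- `comp` is a completion of the partial profile `prof`: every voter's strict partial
order is replaced by a linear (strict total) order extending it. -/
def Completes {α : Type*} {n : ℕ} (comp prof : Fin n → α → α → Prop) : Prop :=
  ∀ i, IsStrictTotalOrder α (comp i) ∧ ∀ x y, prof i x y → comp i x y

/-!
Since `p` takes part in the first pairwise comparison of the amendment procedure and a loss
eliminates it for good, it is the amendment winner exactly when it beats every other alternative.
Each of these comparisons can be treated separately: a strict order that does not rank `p` above `c`
has a linear extension that does not either, so some completion gives `p` no more support against
`c` than the partial profile already does.
-/

section StrictOrderExtension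

variable {α : Type*}

theorem exists_isStrictTotalOrder_extending (r : α → α → Prop) [IsStrictOrder α r] :
    ∃ s : α → α → Prop, IsStrictTotalOrder α s ∧ ∀ x y, r x y → s x y := by
  let _ : PartialOrder α := partialOrderOfSO r
  refine ⟨fun x y => toLinearExtension x < toLinearExtension y,
    inferInstanceAs (IsStrictTotalOrder (LinearExtension α) (· < ·)), fun x y hxy => ?_⟩
  have hlt : x < y := hxy
  exact (toLinearExtension.monotone hlt.le).lt_of_ne hlt.ne

theorem isStrictOrder_lt_or_le_and_le [Preorder α] {a b : α} (hba : ¬ b ≤ a) :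
    IsStrictOrder α fun x y => x < y ∨ x ≤ a ∧ b ≤ y where
  irrefl x := by
    rintro (hxx | ⟨hxa, hbx⟩)
    · exact lt_irrefl x hxx
    · exact hba (hbx.trans hxa)
  trans x y z := by
    rintro (hxy | ⟨hxa, hby⟩) (hyz | ⟨hya, hbz⟩)
    · exact .inl (hxy.trans hyz)
    · exact .inr ⟨hxy.le.trans hya, hbz⟩
    · exact .inr ⟨hxa, hby.trans hyz.le⟩
    · exact (hba (hby.trans hya)).elim

theorem exists_isStrictTotalOrder_extending_iff (r : α → α → Prop) [IsStrictOrder α r]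
    (a b : α) :
    ∃ s : α → α → Prop, IsStrictTotalOrder α s ∧ (∀ x y, r x y → s x y) ∧ (s a b ↔ r a b) := by
  let _ : PartialOrder α := partialOrderOfSO r
  by_cases hab : a ≤ b
  · obtain ⟨s, hs, hrs⟩ := exists_isStrictTotalOrder_extending r
    refine ⟨s, hs, hrs, fun hsab => ?_, hrs a b⟩
    exact hab.lt_of_ne fun heq => irrefl_of s b (heq ▸ hsab)
  · have := isStrictOrder_lt_or_le_and_le hab
    obtain ⟨s, hs, hrs⟩ :=
      exists_isStrictTotalOrder_extending fun x y : α => x < y ∨ x ≤ b ∧ a ≤ y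
    have hsba : s b a := hrs b a (.inr ⟨le_rfl, le_rfl⟩)
    exact ⟨s, hs, fun x y hxy => hrs x y (.inl hxy),
      fun hsab => (asymm_of s hsab hsba).elim, fun hrab => hrs a b (.inl hrab)⟩

end StrictOrderExtension

section Majority

variable {α : Type*} {n : ℕ} {w : Fin n → ℕ} {prof comp : Fin n → α → α → Prop} {b c : α}

theorem WBeats.mono (hle : ∀ i, prof i b c → comp i b c) (h : WBeats w prof b c) :
    WBeats w comp b c := by
  have hcount : wPrefCount w prof b c ≤ wPrefCount w comp b c :=
    Finset.sum_le_sum_of_subset (Finset.monotone_filter_right _ fun i _ => hle i)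
  exact h.trans_le (Nat.mul_le_mul_left 2 hcount)

theorem wPrefCount_add_wPrefCount_swap (w : Fin n → ℕ)
    (hlin : ∀ i, IsStrictTotalOrder α (comp i)) (hbc : b ≠ c) :
    wPrefCount w comp b c + wPrefCount w comp c b = ∑ i, w i := by
  have hswap : ∀ i, comp i c b ↔ ¬ comp i b c := fun i =>
    have := hlin i
    ⟨fun hcb => asymm_of (comp i) hcb,
      fun hbc' => ((trichotomous_of (comp i) b c).resolve_left hbc').resolve_left hbc⟩
  simp only [wPrefCount, hswap, Finset.sum_filter_add_sum_filter_not]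

theorem not_wBeats_iff_wBeats_swap (hodd : Odd (∑ i, w i))
    (hlin : ∀ i, IsStrictTotalOrder α (comp i)) (hbc : b ≠ c) :
    ¬ WBeats w comp b c ↔ WBeats w comp c b := by
  have hsum := wPrefCount_add_wPrefCount_swap w hlin hbc
  obtain ⟨k, hk⟩ := hodd
  simp only [WBeats]
  omega

theorem exists_completes_iff (hpo : ∀ i, IsStrictOrder α (prof i)) (b c : α) :
    ∃ comp, Completes comp prof ∧ ∀ i, comp i b c ↔ prof i b c := by
  choose comp hlin hext hiff using fun i => exists_isStrictTotalOrder_extending_iff (prof i) b c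
  exact ⟨comp, fun i => ⟨hlin i, hext i⟩, hiff⟩

theorem forall_completes_wBeats_iff (hpo : ∀ i, IsStrictOrder α (prof i)) :
    (∀ comp, Completes comp prof → WBeats w comp b c) ↔ WBeats w prof b c := by
  refine ⟨fun h => ?_, fun h comp hcomp => h.mono fun i => (hcomp i).2 b c⟩
  obtain ⟨comp, hcomp, hiff⟩ := exists_completes_iff hpo b c
  exact (h comp hcomp).mono fun i => (hiff i).1

end Majority

section Amendment

variable {α : Type*} {n : ℕ} {w : Fin n → ℕ} {prof comp : Fin n → α → α → Prop}
  {a p : α} {l L : List α}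

/-- The winner of a round of the amendment procedure in which the previous round winner `win` meets
the next alternative `c`, as in the fold defining `wAmendWinner`; in a tie, `win` stays. -/
noncomputable def amendRound (w : Fin n → ℕ) (prof : Fin n → α → α → Prop) (win c : α) : α :=
  if WBeats w prof c win then c else win

theorem foldl_amendRound_mem (w : Fin n → ℕ) (prof : Fin n → α → α → Prop) (a : α)
    (l : List α) : l.foldl (amendRound w prof) a ∈ a :: l := by
  induction l generalizing a with
  | nil => exact List.mem_singleton_self a
  | cons c l ih =>
    have hround : amendRound w prof a c = c ∨ amendRound w prof a c = a := ite_eq_or_eq _ _ _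
    have hmem := ih (amendRound w prof a c)
    rw [List.foldl_cons]
    rcases hround with hround | hround <;> rw [hround] at hmem ⊢
    · exact List.mem_cons_of_mem a hmem
    · exact List.cons_subset_cons a (List.subset_cons_self c l) hmem

theorem foldl_amendRound_eq_self_iff (hp : p ∉ l) :
    l.foldl (amendRound w prof) p = p ↔ ∀ c ∈ l, ¬ WBeats w prof c p := by
  induction l with
  | nil => simp
  | cons c l ih =>
    rw [List.foldl_cons, List.forall_mem_cons]
    by_cases hc : WBeats w prof c p
    · have hne : l.foldl (amendRound w prof) c ≠ p := fun heq =>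
        hp (heq ▸ foldl_amendRound_mem w prof c l)
      rw [amendRound, if_pos hc]
      exact iff_of_false hne fun h => h.1 hc
    · rw [amendRound, if_neg hc, ih (List.not_mem_of_not_mem_cons hp), and_iff_right hc]

theorem wAmendWinner_cons_eq_some_self_iff (hp : p ∉ l) :
    wAmendWinner w prof (p :: l) = some p ↔ ∀ c ∈ l, ¬ WBeats w prof c p :=
  Option.some_inj.trans (foldl_amendRound_eq_self_iff hp)

theorem wAmendWinner_cons_cons_eq_some_iff (hpa : p ≠ a) (hp : p ∉ l) :
    wAmendWinner w prof (a :: p :: l) = some p ↔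
      WBeats w prof p a ∧ ∀ c ∈ l, ¬ WBeats w prof c p := by
  change some (l.foldl (amendRound w prof) (amendRound w prof a p)) = some p ↔ _
  rw [Option.some_inj]
  by_cases h : WBeats w prof p a
  · rw [amendRound, if_pos h, foldl_amendRound_eq_self_iff hp, and_iff_right h]
  · rw [amendRound, if_neg h]
    have hne : l.foldl (amendRound w prof) a ≠ p := fun heq =>
      List.not_mem_cons_of_ne_of_not_mem hpa hp (heq ▸ foldl_amendRound_mem w prof a l)
    exact iff_of_false hne fun hbeats => h hbeats.1

theorem wAmendWinner_eq_some_iff_forall_wBeats (hodd : Odd (∑ i, w i))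
    (hlin : ∀ i, IsStrictTotalOrder α (comp i)) (hnodup : L.Nodup) (hp : p ∈ L.take 2) :
    wAmendWinner w comp L = some p ↔ ∀ c ∈ L, c ≠ p → WBeats w comp p c := by
  have hbeats : ∀ l : List α, p ∉ l →
      ((∀ c ∈ l, ¬ WBeats w comp c p) ↔ ∀ c ∈ l, c ≠ p → WBeats w comp p c) := fun l hl =>
    forall₂_congr fun c hc => by
      have hcp : c ≠ p := ne_of_mem_of_not_mem hc hl
      rw [not_wBeats_iff_wBeats_swap hodd hlin hcp, forall_prop_of_true hcp]
  match L, hp with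
  | a :: l, hp =>
    rw [List.take_succ_cons, List.mem_cons] at hp
    rcases hp with rfl | hp
    · have hpl := (List.nodup_cons.1 hnodup).1
      rw [wAmendWinner_cons_eq_some_self_iff hpl, hbeats l hpl]
      simp
    · match l, hp with
      | b :: l, hp =>
        obtain rfl : p = b := by simpa using hp
        have hpa : p ≠ a := by grind
        have hpl : p ∉ l := by grind
        rw [wAmendWinner_cons_cons_eq_some_iff hpa hpl, hbeats l hpl]
        simp [hpa.symm]

end Amendment

theorem stmt18_general {α : Type*} {n : ℕ} (prof : Fin n → α → α → Prop)
    (hpo : ∀ i, IsStrictOrder α (prof i)) (w : Fin n → ℕ) (hodd : Odd (∑ i, w i))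
    (L : List α) (hnodup : L.Nodup) (p : α) (hp : p ∈ L.take 2) :
    (∀ comp : Fin n → α → α → Prop, Completes comp prof →
      wAmendWinner w comp L = some p) ↔
    (∀ c ∈ L, c ≠ p → 2 * wPrefCount w prof p c > ∑ i, w i) := calc
    _ ↔ ∀ comp, Completes comp prof → ∀ c ∈ L, c ≠ p → WBeats w comp p c :=
      forall₂_congr fun comp hcomp =>
        wAmendWinner_eq_some_iff_forall_wBeats hodd (fun i => (hcomp i).1) hnodup hp
    _ ↔ ∀ c ∈ L, c ≠ p → ∀ comp, Completes comp prof → WBeats w comp p c := by tauto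
    _ ↔ ∀ c ∈ L, c ≠ p → WBeats w prof p c :=
      forall₃_congr fun _ _ _ => forall_completes_wBeats_iff hpo

/-- For a weighted partial profile over at most three alternatives with odd total weight
and an agenda in which `p` occupies the first or the second position: `p` is the weighted
amendment winner in every completion iff for every other alternative `c` the voters whose
partial order already ranks `p` above `c` have total weight more than half of the total
weight. -/
theorem stmt18 {α : Type*} [Fintype α] [DecidableEq α] (hcard : Fintype.card α ≤ 3)
    {n : ℕ} (prof : Fin n → α → α → Prop) (hpo : ∀ i, IsStrictOrder α (prof i))
    (w : Fin n → ℕ) (hw : ∀ i, 0 < w i) (hodd : Odd (∑ i, w i))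
    (L : List α) (hnodup : L.Nodup) (hcomplete : ∀ a : α, a ∈ L)
    (p : α) (hp : p ∈ L.take 2) :
    (∀ comp : Fin n → α → α → Prop, Completes comp prof →
      wAmendWinner w comp L = some p) ↔
    (∀ c : α, c ≠ p → 2 * wPrefCount w prof p c > ∑ i, w i) := by
  simpa only [hcomplete, forall_true_left] using
    stmt18_general prof hpo w hodd L hnodup p hp
end

section
/- Let P be a weighted partial profile over exactly three alternatives a, b, p, where each voter has a strict partial order and a positive integer weight, and let W be the total weight, assumed odd. Let the agenda be L: a ▷ b ▷ p. Then p is the weighted amendment winner under L in every completion of P if and only if it is not the case that [a beats b in some completion of P and a beats p in some completion of P], and it is not the case that [b beats a in some completion of P and b beats p in some completion of P]. -/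
open scoped Classical

/-! Since the total weight is odd, `p` loses in a completion exactly when one of `a`, `b` beats both
the other and `p`. It remains to see that an alternative `x` which can win two contests in separate
completions can win both in a single one. For this, take any completion and let each voter move `x`,
together with everything that the voter's reported comparisons force above `x`, to the top. The
result is again a completion, and in it every voter prefers `x` to each alternative to which some
completion lets that voter prefer it, so `x` wins every contest that it can win at all. -/

section Relation

variable {α : Type*} {r s : α → α → Prop} {D : Set α} {u v x y : α}

/-- The relation obtained from the ranking `s` (best alternative on the left) by moving the block
`D` to the top, keeping the order given by `s` inside `D` and inside its complement. -/
def moveToTop (D : Set α) (s : α → α → Prop) (u v : α) : Prop :=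
  u ∈ D ∧ v ∉ D ∨ (u ∈ D ↔ v ∈ D) ∧ s u v

instance [IsStrictTotalOrder α s] : IsStrictTotalOrder α (moveToTop D s) where
  irrefl u h := by
    have := irrefl_of s u
    grind [moveToTop]
  trans u v t huv hvt := by
    have : s u v → s v t → s u t := trans_of s
    grind [moveToTop]
  trichotomous u v huv hvu := by
    have := trichotomous_of s u v
    grind [moveToTop]

theorem moveToTop_of_rel (hrs : ∀ u v, r u v → s u v) (hD : ∀ u v, r u v → v ∈ D → u ∈ D)
    (huv : r u v) : moveToTop D s u v := by
  have := hrs u v huv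
  have := hD u v huv
  grind [moveToTop]

/-- The alternative `x` together with all those that every transitive relation extending `r` places
above it. -/
def forcedAbove (r : α → α → Prop) (x : α) : Set α :=
  {u | Relation.ReflTransGen r u x}

theorem mem_forcedAbove_of_rel (huv : r u v) (hv : v ∈ forcedAbove r x) :
    u ∈ forcedAbove r x :=
  Relation.ReflTransGen.head huv hv

theorem notMem_forcedAbove_of_rel [IsStrictOrder α s] (hrs : ∀ u v, r u v → s u v)
    (hxy : s x y) : y ∉ forcedAbove r x := fun hyx =>
  have hxx : Relation.TransGen s x x := .head' hxy (Relation.ReflTransGen.mono hrs _ _ hyx)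
  irrefl_of s x (by rwa [Relation.transGen_eq_self] at hxx)

end Relation

section Profile

variable {α : Type*} {n : ℕ} {w : Fin n → ℕ} {prof comp comp' : Fin n → α → α → Prop}
  {a b p x y z : α}

theorem WBeats.mono_s19 (h : ∀ i, comp i x y → comp' i x y) (hxy : WBeats w comp x y) :
    WBeats w comp' x y := by
  have hcount : wPrefCount w comp x y ≤ wPrefCount w comp' x y :=
    Finset.sum_le_sum_of_subset (Finset.monotone_filter_right _ fun i _ => h i)
  exact hxy.trans_le (Nat.mul_le_mul_left 2 hcount)

theorem wPrefCount_add_wPrefCount_swap_s19 (w : Fin n → ℕ) [∀ i, Std.Asymm (prof i)]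
    [∀ i, Std.Trichotomous (prof i)] (hxy : x ≠ y) :
    wPrefCount w prof x y + wPrefCount w prof y x = ∑ i, w i := by
  have hswap (i : Fin n) : prof i y x ↔ ¬ prof i x y :=
    ⟨asymm_of (prof i), fun h => by_contra fun h' => hxy (Std.Trichotomous.trichotomous _ _ h h')⟩
  simp only [wPrefCount, hswap, Finset.sum_filter_add_sum_filter_not]

theorem not_wBeats_iff_wBeats_swap_s19 [∀ i, Std.Asymm (prof i)] [∀ i, Std.Trichotomous (prof i)]
    (hodd : Odd (∑ i, w i)) (hxy : x ≠ y) : ¬ WBeats w prof x y ↔ WBeats w prof y x := by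
  have hsum := wPrefCount_add_wPrefCount_swap_s19 (prof := prof) w hxy
  obtain ⟨k, hk⟩ := hodd
  unfold WBeats
  omega

theorem wAmendWinner_triple_eq_some_last_iff [∀ i, Std.Asymm (prof i)]
    [∀ i, Std.Trichotomous (prof i)] (hodd : Odd (∑ i, w i)) (hab : a ≠ b) (hap : a ≠ p)
    (hbp : b ≠ p) :
    wAmendWinner w prof [a, b, p] = some p ↔
      ¬ (WBeats w prof a b ∧ WBeats w prof a p) ∧ ¬ (WBeats w prof b a ∧ WBeats w prof b p) := by
  have h_ab : ¬ WBeats w prof a b ↔ WBeats w prof b a := not_wBeats_iff_wBeats_swap_s19 hodd hab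
  have h_ap : ¬ WBeats w prof a p ↔ WBeats w prof p a := not_wBeats_iff_wBeats_swap_s19 hodd hap
  have h_bp : ¬ WBeats w prof b p ↔ WBeats w prof p b := not_wBeats_iff_wBeats_swap_s19 hodd hbp
  simp only [wAmendWinner, List.foldl_cons, List.foldl_nil, Option.some.injEq]
  by_cases hba : WBeats w prof b a
  · simp [hba, h_ab.mpr hba, ← h_bp, hbp]
  · simp [hba, not_not.mp (mt h_ab.mp hba), ← h_ap, hap]

/-- The profile in which each voter's ranking in `comp` is changed by moving to the top `x` and
everything that the voter's comparisons in `prof` force above `x`. -/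
def favor (prof comp : Fin n → α → α → Prop) (x : α) (i : Fin n) : α → α → Prop :=
  moveToTop (forcedAbove (prof i) x) (comp i)

theorem completes_favor (hcomp : Completes comp prof) (x : α) :
    Completes (favor prof comp x) prof := fun i =>
  have := (hcomp i).1
  ⟨inferInstanceAs (IsStrictTotalOrder α (moveToTop _ _)),
    fun _ _ => moveToTop_of_rel (hcomp i).2 fun _ _ => mem_forcedAbove_of_rel⟩

theorem wBeats_favor (hcomp : Completes comp prof) (hxy : WBeats w comp x y) :
    WBeats w (favor prof comp' x) x y :=
  hxy.mono_s19 fun i hi =>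
    have := (hcomp i).1
    .inl ⟨.refl, notMem_forcedAbove_of_rel (hcomp i).2 hi⟩

theorem exists_completes_wBeats_and_wBeats_iff :
    (∃ comp, Completes comp prof ∧ WBeats w comp x y ∧ WBeats w comp x z) ↔
      (∃ comp, Completes comp prof ∧ WBeats w comp x y) ∧
        ∃ comp, Completes comp prof ∧ WBeats w comp x z := by
  constructor
  · rintro ⟨comp, hcomp, hxy, hxz⟩
    exact ⟨⟨comp, hcomp, hxy⟩, comp, hcomp, hxz⟩
  · rintro ⟨⟨comp, hcomp, hxy⟩, comp', hcomp', hxz⟩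
    exact ⟨favor prof comp x, completes_favor hcomp x,
      wBeats_favor hcomp hxy, wBeats_favor hcomp' hxz⟩

end Profile

theorem stmt19_general {α : Type*} {n : ℕ} (prof : Fin n → α → α → Prop) (w : Fin n → ℕ)
    (hodd : Odd (∑ i, w i)) {a b p : α} (hab : a ≠ b) (hap : a ≠ p) (hbp : b ≠ p) :
    (∀ comp, Completes comp prof → wAmendWinner w comp [a, b, p] = some p) ↔
      ¬ ((∃ comp, Completes comp prof ∧ WBeats w comp a b) ∧
          ∃ comp, Completes comp prof ∧ WBeats w comp a p) ∧
      ¬ ((∃ comp, Completes comp prof ∧ WBeats w comp b a) ∧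
          ∃ comp, Completes comp prof ∧ WBeats w comp b p) := by
  rw [← exists_completes_wBeats_and_wBeats_iff, ← exists_completes_wBeats_and_wBeats_iff,
    not_exists, not_exists, ← forall_and]
  refine forall_congr' fun comp => ?_
  rw [not_and (b := _ ∧ _), not_and (b := _ ∧ _), ← imp_and]
  refine forall_congr' fun hcomp => ?_
  have (i : Fin n) : IsStrictTotalOrder α (comp i) := (hcomp i).1
  exact wAmendWinner_triple_eq_some_last_iff hodd hab hap hbp

/-- For a weighted partial profile over exactly the three alternatives `a`, `b`, `p` with
odd total weight and the agenda `a ▷ b ▷ p`: `p` is the weighted amendment winner in every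
completion iff it is not the case that `a` beats `b` in some completion and `a` beats `p`
in some completion, and it is not the case that `b` beats `a` in some completion and `b`
beats `p` in some completion. -/
theorem stmt19 {n : ℕ} (prof : Fin n → Alt3 → Alt3 → Prop)
    (hpo : ∀ i, IsStrictOrder Alt3 (prof i))
    (w : Fin n → ℕ) (hw : ∀ i, 0 < w i) (hodd : Odd (∑ i, w i)) :
    (∀ comp : Fin n → Alt3 → Alt3 → Prop, Completes comp prof →
      wAmendWinner w comp [Alt3.A, Alt3.B, Alt3.P] = some Alt3.P) ↔
    (¬ ((∃ comp, Completes comp prof ∧ WBeats w comp Alt3.A Alt3.B) ∧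
        (∃ comp, Completes comp prof ∧ WBeats w comp Alt3.A Alt3.P)) ∧
     ¬ ((∃ comp, Completes comp prof ∧ WBeats w comp Alt3.B Alt3.A) ∧
        (∃ comp, Completes comp prof ∧ WBeats w comp Alt3.B Alt3.P))) :=
  stmt19_general prof w hodd (by decide) (by decide) (by decide)
end
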